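/- For all i < j with 1 ≤ i < j ≤ n and every point x ∈ U₀, the series F satisfies ∂²F/∂x_{1i}∂x_{2j}(x) = ∂²F/∂x_{1j}∂x_{2i}(x); that is, F is annihilated by the toric operator ∂_{1i}∂_{2j} − ∂_{1j}∂_{2i}. -/

import Mathlib

open Complex Function Polynomial

/-- Partial derivative of `f` with respect to the coordinate `p`. -/
noncomputable def pd {n : ℕ} (p : Fin 2 × Fin n)
    (f : ((Fin 2 × Fin n) → ℝ) → ℂ) (x : (Fin 2 × Fin n) → ℝ) : ℂ :=
  deriv (fun s : ℝ => f (Function.update x p s)) (x p)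

/-- The coefficient
`c_m = (−1)^{|m|} (∏ₖ (−α_k)_{m_k}) (b^{γ+|m|+1} − a^{γ+|m|+1}) / ((γ+|m|+1) ∏ₖ m_k!)`,
where `(z)_j` is the Pochhammer symbol. -/
noncomputable def cm {n : ℕ} (α : Fin n → ℂ) (γ : ℂ) (a b : ℝ)
    (m : Fin n → ℕ) : ℂ :=
  (-1 : ℂ) ^ (∑ k, m k) * (∏ k, (ascPochhammer ℂ (m k)).eval (-(α k)))
    * ((b : ℂ) ^ (γ + ((∑ k, m k : ℕ) : ℂ) + 1)
        - (a : ℂ) ^ (γ + ((∑ k, m k : ℕ) : ℂ) + 1))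
    / ((γ + ((∑ k, m k : ℕ) : ℂ) + 1) * ∏ k, ((m k).factorial : ℂ))

/-- The series `F(x) = (∏ₖ x_{1k}^{α_k}) Σ_{m ∈ ℕⁿ} c_m ∏ₖ (x_{2k}/x_{1k})^{m_k}`;
the first row of `x` is indexed by `0 : Fin 2`, the second row by `1 : Fin 2`. -/
noncomputable def Fser {n : ℕ} (α : Fin n → ℂ) (γ : ℂ) (a b : ℝ)
    (x : (Fin 2 × Fin n) → ℝ) : ℂ :=
  (∏ k, (x (0, k) : ℂ) ^ (α k)) *
    ∑' m : Fin n → ℕ, cm α γ a b m * ∏ k, ((x (1, k) / x (0, k) : ℝ) : ℂ) ^ m k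

open Topology

/-- The integrand of the Euler integral representation. -/
noncomputable def eulH {n : ℕ} (α : Fin n → ℂ) (γ : ℂ) (x : (Fin 2 × Fin n) → ℝ) (t : ℝ) : ℂ :=
  (t : ℂ) ^ γ * ∏ k, ((x (0, k) + x (1, k) * t : ℝ) : ℂ) ^ (α k)

/-- The Euler integral. -/
noncomputable def eulG {n : ℕ} (α : Fin n → ℂ) (γ : ℂ) (a b : ℝ)
    (x : (Fin 2 × Fin n) → ℝ) : ℂ :=
  ∫ t in a..b, eulH α γ x t

lemma eulH_cont {n : ℕ} (α : Fin n → ℂ) (γ : ℂ) :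
    ContinuousOn (fun q : ((Fin 2 × Fin n) → ℝ) × ℝ => eulH α γ q.1 q.2)
      {q | (∀ p, 0 < q.1 p) ∧ 0 < q.2} := by
  unfold eulH
  refine ContinuousOn.mul ?_ (continuousOn_finsetProd _ fun k _ => ?_)
  · refine ContinuousOn.cpow (by fun_prop) continuousOn_const ?_
    rintro q ⟨_, hq⟩
    exact Complex.ofReal_mem_slitPlane.2 hq
  · refine ContinuousOn.cpow (by fun_prop) continuousOn_const ?_
    rintro q ⟨h1, hq⟩
    refine Complex.ofReal_mem_slitPlane.2 ?_
    have := h1 (0, k)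
    have := mul_pos (h1 (1, k)) hq
    positivity

lemma eulH_deriv {n : ℕ} (α : Fin n → ℂ) (γ : ℂ) (e : Fin 2) (j : Fin n)
    (y : (Fin 2 × Fin n) → ℝ) (hy : ∀ p, 0 < y p) (t : ℝ) (ht : 0 < t) :
    HasDerivAt (fun s : ℝ => eulH α γ (Function.update y (e, j) s) t)
      (α j * eulH (Function.update α j (α j - 1)) (γ + ((e : ℕ) : ℂ)) y t) (y (e, j)) := by
  have hw : 0 < y (0, j) + y (1, j) * t := by
    have := hy (0, j)
    have := mul_pos (hy (1, j)) ht
    positivity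
  have htc : (t : ℂ) ≠ 0 := by exact_mod_cast ht.ne'
  set P : ℂ := ∏ k ∈ Finset.univ.erase j, ((y (0, k) + y (1, k) * t : ℝ) : ℂ) ^ (α k) with hP
  have h1 : ∀ s : ℝ, eulH α γ (Function.update y (e, j) s) t
      = (t : ℂ) ^ γ * (((((y (0, j) + y (1, j) * t) + (s - y (e, j)) * t ^ (e : ℕ) : ℝ) : ℂ))
          ^ (α j) * P) := by
    intro s
    unfold eulH
    rw [← Finset.mul_prod_erase _ _ (Finset.mem_univ j)]
    congr 2
    · congr 2
      fin_cases e
      · simp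
        ring
      · simp
        ring
    · refine Finset.prod_congr rfl fun k hk => ?_
      have hk' : k ≠ j := (Finset.mem_erase.1 hk).1
      rw [Function.update_of_ne (by simp [hk']), Function.update_of_ne (by simp [hk'])]
  have h2 : eulH (Function.update α j (α j - 1)) (γ + ((e : ℕ) : ℂ)) y t
      = (t : ℂ) ^ γ * (t : ℂ) ^ (e : ℕ) *
        (((y (0, j) + y (1, j) * t : ℝ) : ℂ) ^ (α j - 1) * P) := by
    unfold eulH
    rw [← Finset.mul_prod_erase _ _ (Finset.mem_univ j), Complex.cpow_add _ _ htc,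
      Complex.cpow_natCast, Function.update_self]
    congr 2
    refine Finset.prod_congr rfl fun k hk => ?_
    rw [Function.update_of_ne (Finset.mem_erase.1 hk).1]
  rw [h2]
  simp_rw [h1]
  have hlin : HasDerivAt (fun s : ℝ => (y (0, j) + y (1, j) * t) + (s - y (e, j)) * t ^ (e : ℕ))
      (t ^ (e : ℕ)) (y (e, j)) := by
    simpa using (((hasDerivAt_id (y (e, j))).sub_const (y (e, j))).mul_const
      (t ^ (e : ℕ))).const_add (y (0, j) + y (1, j) * t)
  have h3 := HasDerivAt.comp_of_eq (y (e, j)) (Complex.hasStrictDerivAt_cpow_const (c := α j)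
    (Complex.ofReal_mem_slitPlane.2 hw)).hasDerivAt hlin.ofReal_comp (by simp)
  have h4 := (h3.mul_const P).const_mul ((t : ℂ) ^ γ)
  have h5 : α j * ((t : ℂ) ^ γ * (t : ℂ) ^ (e : ℕ) *
        (((y (0, j) + y (1, j) * t : ℝ) : ℂ) ^ (α j - 1) * P)) =
      (t : ℂ) ^ γ * (α j * ((y (0, j) + y (1, j) * t : ℝ) : ℂ) ^ (α j - 1) *
        ((t ^ (e : ℕ) : ℝ) : ℂ) * P) := by
    push_cast
    ring
  rw [h5]
  exact h4

lemma eulG_deriv {n : ℕ} (α : Fin n → ℂ) (γ : ℂ) (a b : ℝ) (ha : 0 < a) (hab : a < b)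
    (e : Fin 2) (j : Fin n)
    (y : (Fin 2 × Fin n) → ℝ) (hy : ∀ p, 0 < y p) :
    HasDerivAt (fun s : ℝ => eulG α γ a b (Function.update y (e, j) s))
      (α j * eulG (Function.update α j (α j - 1)) (γ + ((e : ℕ) : ℂ)) a b y) (y (e, j)) := by
  have hpos : ∀ s : ℝ, 0 < s → ∀ p, 0 < Function.update y (e, j) s p := by
    intro s hs p
    by_cases hp : p = (e, j)
    · subst hp; simpa using hs
    · rw [Function.update_of_ne hp]; exact hy p
  have hc := hy (e, j)
  have hS : Set.Icc (y (e, j) / 2) (2 * y (e, j)) ∈ 𝓝 (y (e, j)) :=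
    Icc_mem_nhds (by linarith) (by linarith)
  have hcont : ∀ (β : Fin n → ℂ) (δ : ℂ) (z : (Fin 2 × Fin n) → ℝ), (∀ p, 0 < z p) →
      ContinuousOn (fun t => eulH β δ z t) (Set.Icc a b) := by
    intro β δ z hz
    exact (eulH_cont β δ).comp (f := fun t : ℝ => (z, t)) (by fun_prop)
      (fun t ht => ⟨hz, lt_of_lt_of_le ha ht.1⟩)
  have hint : ∀ (β : Fin n → ℂ) (δ : ℂ) (z : (Fin 2 × Fin n) → ℝ), (∀ p, 0 < z p) →
      IntervalIntegrable (fun t => eulH β δ z t) MeasureTheory.volume a b := by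
    intro β δ z hz
    refine ContinuousOn.intervalIntegrable ?_
    rw [Set.uIcc_of_le hab.le]
    exact hcont β δ z hz
  obtain ⟨C, hC⟩ := ((isCompact_Icc (a := y (e, j) / 2) (b := 2 * y (e, j))).prod
    (isCompact_Icc (a := a) (b := b))).exists_bound_of_continuousOn
    (f := fun q : ℝ × ℝ => eulH (Function.update α j (α j - 1)) (γ + ((e : ℕ) : ℂ))
      (Function.update y (e, j) q.1) q.2)
    ((eulH_cont _ _).comp (f := fun q : ℝ × ℝ => (Function.update y (e, j) q.1, q.2))
      (Continuous.continuousOn (by fun_prop))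
      (fun q hq => ⟨hpos _ (by have := hq.1.1; linarith), lt_of_lt_of_le ha hq.2.1⟩))
  have key := (intervalIntegral.hasDerivAt_integral_of_dominated_loc_of_deriv_le
    (μ := MeasureTheory.volume) (a := a) (b := b)
    (F := fun s t => eulH α γ (Function.update y (e, j) s) t)
    (F' := fun s t => α j * eulH (Function.update α j (α j - 1)) (γ + ((e : ℕ) : ℂ))
      (Function.update y (e, j) s) t)
    (bound := fun _ => ‖α j‖ * C) hS ?_ ?_ ?_ ?_ ?_ ?_).2
  · simpa [eulG, intervalIntegral.integral_const_mul] using key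
  · filter_upwards [hS] with s hs
    have := hint α γ _ (hpos s (by have := hs.1; linarith))
    exact (intervalIntegrable_iff.1 this).aestronglyMeasurable
  · exact hint _ _ _ (hpos _ hc)
  · have := (hint (Function.update α j (α j - 1)) (γ + ((e : ℕ) : ℂ)) _ (hpos _ hc)).const_mul (α j)
    exact (intervalIntegrable_iff.1 this).aestronglyMeasurable
  · refine Filter.Eventually.of_forall fun t ht s hs => ?_
    rw [Set.uIoc_of_le hab.le] at ht
    rw [norm_mul]
    exact mul_le_mul_of_nonneg_left (hC (s, t) ⟨hs, ht.1.le, ht.2⟩) (norm_nonneg _)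
  · exact intervalIntegrable_const
  · refine Filter.Eventually.of_forall fun t ht s hs => ?_
    rw [Set.uIoc_of_le hab.le] at ht
    have := eulH_deriv α γ e j (Function.update y (e, j) s)
      (hpos s (by have := hs.1; linarith)) t (ha.trans ht.1)
    simpa using this

lemma mul_hasSum_aux {A : Type} [NormedField A] [CompleteSpace A] {ι κ : Type}
    (f : ι → A) (g : κ → A) (s t : A)
    (hf : Summable fun p => ‖f p‖) (hg : Summable fun p => ‖g p‖)
    (hs : HasSum f s) (ht : HasSum g t) :
    Summable (fun q : ι × κ => ‖f q.1 * g q.2‖) ∧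
      HasSum (fun q : ι × κ => f q.1 * g q.2) (s * t) := by
  have h : Summable (fun q : ι × κ => ‖f q.1 * g q.2‖) := Summable.mul_norm hf hg
  exact ⟨h, hs.mul ht h.of_norm⟩

lemma prod_hasSum {A : Type} [NormedField A] [CompleteSpace A] :
    ∀ {n : ℕ} (f : Fin n → ℕ → A) (s : Fin n → A),
    (∀ k, Summable fun p => ‖f k p‖) → (∀ k, HasSum (f k) (s k)) →
    Summable (fun m : Fin n → ℕ => ‖∏ k, f k (m k)‖) ∧
      HasSum (fun m : Fin n → ℕ => ∏ k, f k (m k)) (∏ k, s k) := by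
  intro n
  induction n with
  | zero =>
    intro f s _ _
    refine ⟨(hasSum_fintype _).summable, ?_⟩
    simp
  | succ n ih =>
    intro f s hf hs
    obtain ⟨h1, h2⟩ := ih (fun k => f k.succ) (fun k => s k.succ) (fun k => hf _) (fun k => hs _)
    obtain ⟨hsum, hhs⟩ := mul_hasSum_aux (f 0) (fun m : Fin n → ℕ => ∏ k : Fin n, f k.succ (m k))
      (s 0) (∏ k : Fin n, s k.succ) (hf 0) h1 (hs 0) h2
    constructor
    · rw [← (Fin.consEquiv (fun _ : Fin (n + 1) => ℕ)).summable_iff]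
      refine hsum.congr fun q => ?_
      simp [Fin.consEquiv, Fin.prod_univ_succ]
    · rw [← (Fin.consEquiv (fun _ : Fin (n + 1) => ℕ)).hasSum_iff, Fin.prod_univ_succ]
      convert hhs using 1
      ext q
      simp [Fin.consEquiv, Fin.prod_univ_succ]

/-- binomial coefficient -/
noncomputable def bco (α : ℂ) (p : ℕ) : ℂ :=
  (-1 : ℂ) ^ p * (ascPochhammer ℂ p).eval (-α) / (p.factorial : ℂ)

lemma bco_eq (α : ℂ) (p : ℕ) : bco α p = Ring.choose α p := by
  rw [Ring.choose_eq_smul, bco]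
  simp only [Polynomial.descPochhammer_smeval_eq_ascPochhammer,
    Polynomial.ascPochhammer_smeval_cast, Polynomial.ascPochhammer_smeval_eq_eval,
    ascPochhammer_eval_neg_eq_descPochhammer, descPochhammer_eval_eq_ascPochhammer]
  rw [← mul_assoc, ← mul_pow]
  simp [div_eq_inv_mul]

lemma bco_hasSum (α z : ℂ) (hz : ‖z‖ < 1) :
    (Summable fun p => ‖bco α p * z ^ p‖) ∧ HasSum (fun p => bco α p * z ^ p) ((1 + z) ^ α) := by
  have hb := Complex.one_add_cpow_hasFPowerSeriesOnBall_zero (a := α)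
  have hmem : z ∈ Metric.eball (0 : ℂ) 1 := by
    rw [← ENNReal.ofReal_one, Metric.eball_ofReal]
    simpa using hz
  have he : ∀ p : ℕ, (binomialSeries ℂ α p fun _ => z) = bco α p * z ^ p := by
    intro p
    rw [binomialSeries, FormalMultilinearSeries.ofScalars_apply_eq, bco_eq, smul_eq_mul]
  constructor
  · have := (binomialSeries ℂ α).summable_norm_apply (x := z)
      (Metric.eball_subset_eball hb.r_le hmem)
    simpa only [he] using this
  · have := hb.hasSum hmem
    simpa only [he, zero_add] using this

lemma Fser_eq {n : ℕ} (α : Fin n → ℂ) (γ : ℂ) (a b : ℝ)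
    (ha : 0 < a) (hab : a < b) (hγ : ∀ j : ℕ, γ ≠ -((j : ℂ) + 1))
    (x : (Fin 2 × Fin n) → ℝ) (hx : ∀ p, 0 < x p)
    (hU : ∀ k, x (1, k) * b < x (0, k)) :
    Fser α γ a b x = eulG α γ a b x := by
  have hb : 0 < b := ha.trans hab
  set u : Fin n → ℝ := fun k => x (1, k) / x (0, k) with hu
  have hu0 : ∀ k, 0 < u k := fun k => div_pos (hx _) (hx _)
  have hub : ∀ k, u k * b < 1 := by
    intro k
    have := hx (0, k)
    rw [hu]
    simp only
    rw [div_mul_eq_mul_div, div_lt_one this]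
    exact hU k
  have hnorm : ∀ k (t : ℝ), 0 < t → t ≤ b → ‖((u k * t : ℝ) : ℂ)‖ < 1 := by
    intro k t h0 h1
    rw [Complex.norm_real, Real.norm_of_nonneg (mul_pos (hu0 k) h0).le]
    exact lt_of_le_of_lt (mul_le_mul_of_nonneg_left h1 (hu0 k).le) (hub k)
  have hB := (prod_hasSum (fun k p => bco (α k) p * ((u k * b : ℝ) : ℂ) ^ p) _
    (fun k => (bco_hasSum _ _ (hnorm k b hb le_rfl)).1)
    (fun k => (bco_hasSum _ _ (hnorm k b hb le_rfl)).2)).1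
  have hcont : ContinuousOn (fun t : ℝ => (t : ℂ) ^ γ) (Set.Icc a b) := by
    refine ContinuousOn.cpow (by fun_prop) continuousOn_const ?_
    intro t ht
    exact Complex.ofReal_mem_slitPlane.2 (lt_of_lt_of_le ha ht.1)
  obtain ⟨C, hC⟩ := (isCompact_Icc (a := a) (b := b)).exists_bound_of_continuousOn hcont
  have key := intervalIntegral.hasSum_integral_of_dominated_convergence
    (μ := MeasureTheory.volume) (a := a) (b := b)
    (F := fun (m : Fin n → ℕ) (t : ℝ) =>
      (t : ℂ) ^ γ * ∏ k, (bco (α k) (m k) * ((u k * t : ℝ) : ℂ) ^ (m k)))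
    (f := fun t : ℝ => (t : ℂ) ^ γ * ∏ k, (1 + ((u k * t : ℝ) : ℂ)) ^ (α k))
    (fun m _ => C * ‖∏ k, (bco (α k) (m k) * ((u k * b : ℝ) : ℂ) ^ (m k))‖)
    ?_ ?_ ?_ ?_ ?_
  · have hterm : ∀ m : Fin n → ℕ, (∫ t in a..b,
        (t : ℂ) ^ γ * ∏ k, (bco (α k) (m k) * ((u k * t : ℝ) : ℂ) ^ (m k)))
        = cm α γ a b m * ∏ k, ((x (1, k) / x (0, k) : ℝ) : ℂ) ^ m k := by
      intro m
      have h1 : (∫ t in a..b,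
        (t : ℂ) ^ γ * ∏ k, (bco (α k) (m k) * ((u k * t : ℝ) : ℂ) ^ (m k)))
        = ∫ t in a..b, (∏ k, bco (α k) (m k) * (u k : ℂ) ^ (m k)) *
          (t : ℂ) ^ (γ + ((∑ k, m k : ℕ) : ℂ)) := by
        refine intervalIntegral.integral_congr fun t ht => ?_
        rw [Set.uIcc_of_le hab.le] at ht
        have htc : (t : ℂ) ≠ 0 := by exact_mod_cast (lt_of_lt_of_le ha ht.1).ne'
        rw [Complex.cpow_add _ _ htc, Complex.cpow_natCast, ← Finset.prod_pow_eq_pow_sum]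
        simp only [Complex.ofReal_mul, mul_pow, Finset.prod_mul_distrib]
        ring
      have hne : γ + ((∑ k, m k : ℕ) : ℂ) ≠ -1 := by
        intro h
        apply hγ (∑ k, m k)
        linear_combination h
      rw [h1, intervalIntegral.integral_const_mul, integral_cpow (Or.inr ⟨hne, ?_⟩)]
      · unfold cm bco
        simp only [Finset.prod_mul_distrib, Finset.prod_div_distrib, Finset.prod_pow_eq_pow_sum]
        simp only [hu, div_eq_mul_inv, mul_inv]
        ring
      · rw [Set.uIcc_of_le hab.le]
        exact fun h => absurd h.1 (not_le.2 ha)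
    simp_rw [hterm] at key
    unfold Fser
    rw [key.tsum_eq, ← intervalIntegral.integral_const_mul]
    unfold eulG
    refine intervalIntegral.integral_congr fun t ht => ?_
    rw [Set.uIcc_of_le hab.le] at ht
    have ht0 := lt_of_lt_of_le ha ht.1
    unfold eulH
    rw [mul_left_comm, ← Finset.prod_mul_distrib]
    congr 1
    refine Finset.prod_congr rfl fun k _ => ?_
    have h0 := hx (0, k)
    have h1 : (0 : ℝ) ≤ 1 + u k * t := by
      have := mul_pos (hu0 k) ht0
      positivity
    have h2 : x (0, k) + x (1, k) * t = x (0, k) * (1 + u k * t) := by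
      rw [hu]
      field_simp
    rw [h2, Complex.ofReal_mul (x (0, k)), Complex.mul_cpow_ofReal_nonneg h0.le h1]
    push_cast
    rfl
  · intro m
    refine (ContinuousOn.mul ?_ (Continuous.continuousOn (by fun_prop))).aestronglyMeasurable
      measurableSet_uIoc
    refine hcont.mono ?_
    rw [Set.uIoc_of_le hab.le]
    exact Set.Ioc_subset_Icc_self
  · refine fun m => Filter.Eventually.of_forall fun t ht => ?_
    rw [Set.uIoc_of_le hab.le] at ht
    have ht0 := ha.trans ht.1
    rw [norm_mul]
    refine mul_le_mul (hC t ⟨ht.1.le, ht.2⟩) ?_ (norm_nonneg _)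
      ((norm_nonneg _).trans (hC t ⟨ht.1.le, ht.2⟩))
    rw [norm_prod, norm_prod]
    refine Finset.prod_le_prod (fun _ _ => norm_nonneg _) fun k _ => ?_
    rw [norm_mul, norm_mul, norm_pow, norm_pow, Complex.norm_real, Complex.norm_real,
      Real.norm_of_nonneg (mul_pos (hu0 k) ht0).le, Real.norm_of_nonneg (mul_pos (hu0 k) hb).le]
    refine mul_le_mul_of_nonneg_left ?_ (norm_nonneg _)
    exact pow_le_pow_left₀ (mul_pos (hu0 k) ht0).le
      (mul_le_mul_of_nonneg_left ht.2 (hu0 k).le) _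
  · exact Filter.Eventually.of_forall fun t _ => hB.mul_left C
  · exact intervalIntegrable_const
  · refine Filter.Eventually.of_forall fun t ht => ?_
    rw [Set.uIoc_of_le hab.le] at ht
    have ht0 := ha.trans ht.1
    exact (prod_hasSum (fun k p => bco (α k) p * ((u k * t : ℝ) : ℂ) ^ p) _
      (fun k => (bco_hasSum _ _ (hnorm k t ht0 ht.2)).1)
      (fun k => (bco_hasSum _ _ (hnorm k t ht0 ht.2)).2)).2.mul_left _

/-- The domain `U₀`. -/
def eulU (n : ℕ) (b : ℝ) : Set ((Fin 2 × Fin n) → ℝ) :=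
  {x | (∀ p, 0 < x p) ∧ ∀ k, x (1, k) * b < x (0, k)}

lemma eulU_open (n : ℕ) (b : ℝ) : IsOpen (eulU n b) := by
  unfold eulU
  simp only [Set.ofPred_and, Set.ofPred_forall]
  refine IsOpen.inter (isOpen_iInter_of_finite fun p => ?_) (isOpen_iInter_of_finite fun k => ?_)
  · exact isOpen_lt (by fun_prop) (by fun_prop)
  · exact isOpen_lt (by fun_prop) (by fun_prop)

lemma pd_congr {n : ℕ} (b : ℝ) (p : Fin 2 × Fin n) (f g : ((Fin 2 × Fin n) → ℝ) → ℂ)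
    (hfg : ∀ y ∈ eulU n b, f y = g y) (x : (Fin 2 × Fin n) → ℝ) (hx : x ∈ eulU n b) :
    pd p f x = pd p g x := by
  unfold pd
  refine Filter.EventuallyEq.deriv_eq ?_
  have hc : ContinuousAt (fun s : ℝ => Function.update x p s) (x p) :=
    Continuous.continuousAt (by fun_prop)
  have := hc.preimage_mem_nhds (t := eulU n b)
    (by rw [Function.update_eq_self]; exact (eulU_open n b).mem_nhds hx)
  filter_upwards [this] with s hs
  exact hfg _ hs

lemma pd_pd {n : ℕ} (α : Fin n → ℂ) (γ : ℂ) (a b : ℝ)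
    (ha : 0 < a) (hab : a < b) (hγ : ∀ j : ℕ, γ ≠ -((j : ℂ) + 1))
    (i j : Fin n) (x : (Fin 2 × Fin n) → ℝ) (hx : x ∈ eulU n b) (hij : i ≠ j) :
    pd (0, i) (pd (1, j) (Fser α γ a b)) x
      = α j * (α i * eulG (Function.update (Function.update α j (α j - 1)) i (α i - 1))
        (γ + 1) a b x) := by
  rw [pd_congr b (0, i) _ (fun y => α j * eulG (Function.update α j (α j - 1)) (γ + 1) a b y) _ x hx]
  · have := (eulG_deriv (Function.update α j (α j - 1)) (γ + 1) a b ha hab 0 i x hx.1).const_mul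
      (α j)
    unfold pd
    rw [this.deriv]
    simp [Function.update_of_ne hij]
  · intro y hy
    rw [pd_congr b (1, j) _ (eulG α γ a b) (fun z hz => Fser_eq α γ a b ha hab hγ z hz.1 hz.2) y hy]
    unfold pd
    rw [(eulG_deriv α γ a b ha hab 1 j y hy.1).deriv]
    simp

/-- on `U₀` the series `F` is annihilated by the toric operator
`∂_{1i}∂_{2j} − ∂_{1j}∂_{2i}`. -/
theorem stmt11 {n : ℕ} (hn : 1 ≤ n) (α : Fin n → ℂ) (γ : ℂ) (a b : ℝ)
    (ha : 0 < a) (hab : a < b) (hγ : ∀ j : ℕ, γ ≠ -((j : ℂ) + 1))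
    (i j : Fin n) (hij : i < j) (x : (Fin 2 × Fin n) → ℝ) (hx : ∀ p, 0 < x p)
    (hU : ∀ k, x (1, k) * b < x (0, k)) :
    pd (0, i) (pd (1, j) (Fser α γ a b)) x
      = pd (0, j) (pd (1, i) (Fser α γ a b)) x := by
  rw [pd_pd α γ a b ha hab hγ i j x ⟨hx, hU⟩ hij.ne,
    pd_pd α γ a b ha hab hγ j i x ⟨hx, hU⟩ hij.ne', Function.update_comm hij.ne]
  ring
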